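/- Let U ∈ R^{t×n} have nonnegative entries with each row summing to 1. Then the dual cone of SDD^n_+(U) := U^T (SDD^t_+) U satisfies (SDD^n_+(U))* = {Y ∈ S^n : U Y U^T ∈ (SDD^t_+)*} = {Y ∈ S^n : U Y U^T ∈ (SDD^t)* + N^t}. -/

import Mathlib

/-!
Since `tr (Uᵀ X U Y) = tr (X (U Y Uᵀ))`, dualizing the image cone `Uᵀ C U` gives the preimage of
`C*` under `Y ↦ U Y Uᵀ`, so it remains to see that `(SDD ∩ N)* = SDD* + N`. The `2 × 2` principal
submatrices of a member of `(SDD ∩ N)*` are copositive, while a symmetric matrix all of whose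
`2 × 2` principal submatrices are positive semidefinite lies in `SDD*`. A copositive
`[p q; q r]` has `q ≥ -√(p r)`, so replacing `q` by `min q √(p r)` makes it positive semidefinite at
the cost of a nonnegative off-diagonal remainder. This replacement can be performed on all entries
of the matrix at once. The other inclusion holds because `N ⊆ N*`.
-/

open Matrix Set

noncomputable section

/-- The embedding `ι_{ij} : S² → Sⁿ` placing a 2×2 symmetric matrix into
rows/columns `i, j` with zeros elsewhere. -/
def iota {n : ℕ} (i j : Fin n) (S : Matrix (Fin 2) (Fin 2) ℝ) :
    Matrix (Fin n) (Fin n) ℝ :=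
  Matrix.of fun r s =>
    (if r = i ∧ s = i then S 0 0 else 0) +
    (if r = i ∧ s = j then S 0 1 else 0) +
    (if r = j ∧ s = i then S 1 0 else 0) +
    (if r = j ∧ s = j then S 1 1 else 0)

/-- The cone `SDDⁿ = Σ_{i<j} ι_{ij}(S²₊)` of scaled diagonally dominant matrices. -/
def SDD (n : ℕ) : Set (Matrix (Fin n) (Fin n) ℝ) :=
  {X | ∃ S : Fin n → Fin n → Matrix (Fin 2) (Fin 2) ℝ,
    (∀ i j : Fin n, (S i j).PosSemidef) ∧
    X = ∑ i : Fin n, ∑ j : Fin n, if i < j then iota i j (S i j) else 0}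

/-- `Nⁿ`: symmetric entrywise nonnegative matrices. -/
def NonnegMat (n : ℕ) : Set (Matrix (Fin n) (Fin n) ℝ) :=
  {X | X.IsSymm ∧ ∀ i j, 0 ≤ X i j}

/-- Dual cone within the space of symmetric matrices, w.r.t. the trace inner product. -/
def dualCone {n : ℕ} (C : Set (Matrix (Fin n) (Fin n) ℝ)) :
    Set (Matrix (Fin n) (Fin n) ℝ) :=
  {Y | Y.IsSymm ∧ ∀ X ∈ C, 0 ≤ (X * Y).trace}

/-- `SDDⁿ₊ = SDDⁿ ∩ Nⁿ`. -/
def SDDplus (n : ℕ) : Set (Matrix (Fin n) (Fin n) ℝ) := SDD n ∩ NonnegMat n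

/-- `SDDⁿ₊(U) = Uᵀ (SDDᵗ₊) U`. -/
def SDDplusU {t n : ℕ} (U : Matrix (Fin t) (Fin n) ℝ) :
    Set (Matrix (Fin n) (Fin n) ℝ) :=
  {X | ∃ Y ∈ SDDplus t, X = Uᵀ * Y * U}

/-- The conic hull: finite nonnegative combinations of elements of `s`. -/
def conicHull {α : Type*} [AddCommMonoid α] [Module ℝ α] (s : Set α) : Set α :=
  {x | ∃ (N : ℕ) (c : Fin N → ℝ) (v : Fin N → α),
    (∀ k, 0 ≤ c k) ∧ (∀ k, v k ∈ s) ∧ x = ∑ k, c k • v k}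

/-- The completely positive cone `CPⁿ`. -/
def CP (n : ℕ) : Set (Matrix (Fin n) (Fin n) ℝ) :=
  {X | ∃ (k : ℕ) (B : Matrix (Fin k) (Fin n) ℝ), (∀ i j, 0 ≤ B i j) ∧ X = Bᵀ * B}

open scoped Pointwise

section Copositive

variable {ι : Type*} [Fintype ι]

/-- Copositivity: the quadratic form of `A` is nonnegative on the nonnegative orthant. -/
def IsCopositive (A : Matrix ι ι ℝ) : Prop :=
  ∀ x : ι → ℝ, 0 ≤ x → 0 ≤ x ⬝ᵥ A *ᵥ x

lemma IsCopositive.quadratic_nonneg {A : Matrix ι ι ℝ} (hA : IsCopositive A) (i j : ι)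
    {a b : ℝ} (ha : 0 ≤ a) (hb : 0 ≤ b) :
    0 ≤ A i i * a ^ 2 + (A i j + A j i) * (a * b) + A j j * b ^ 2 := by
  classical
  have h := hA (Pi.single i a + Pi.single j b)
    (add_nonneg (Pi.single_nonneg.2 ha) (Pi.single_nonneg.2 hb))
  simp only [mulVec_add, add_dotProduct, dotProduct_add, mulVec_single, single_dotProduct,
    Pi.smul_apply, col_apply, MulOpposite.smul_eq_mul_unop, MulOpposite.unop_op] at h
  linarith

lemma IsCopositive.diag_nonneg {A : Matrix ι ι ℝ} (hA : IsCopositive A) (i : ι) : 0 ≤ A i i := by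
  simpa using hA.quadratic_nonneg i i zero_le_one le_rfl

lemma neg_sqrt_mul_le_of_quadratic_nonneg {p q r : ℝ}
    (h : ∀ a b : ℝ, 0 ≤ a → 0 ≤ b → 0 ≤ p * a ^ 2 + 2 * q * (a * b) + r * b ^ 2) :
    -√(p * r) ≤ q := by
  have hp : 0 ≤ p := by simpa using h 1 0
  have hr : 0 ≤ r := by simpa using h 0 1
  rcases le_or_gt 0 q with hq | hq
  · exact (neg_nonpos.2 (Real.sqrt_nonneg _)).trans hq
  -- `p = 0` would leave `2 * q * (a * b) + r * b ^ 2`, negative for large `a`.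
  have hp_pos : 0 < p := by
    refine hp.lt_of_ne fun hp_zero => ?_
    have := h (r + 1) (-q) (by positivity) (by linarith)
    subst hp_zero
    nlinarith [mul_pos_of_neg_of_neg hq hq]
  -- For `b = p` the form is minimal at `a = -q`.
  have hdisc : 0 ≤ p * (p * r - q ^ 2) := by
    linarith [h (-q) p (by linarith) hp]
  have := Real.abs_le_sqrt (sub_nonneg.1 (nonneg_of_mul_nonneg_right hdisc hp_pos))
  exact (abs_le.1 this).1

lemma IsCopositive.neg_sqrt_mul_le {A : Matrix ι ι ℝ} (hA : IsCopositive A) (hsymm : A.IsSymm)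
    (i j : ι) : -√(A i i * A j j) ≤ A i j :=
  neg_sqrt_mul_le_of_quadratic_nonneg fun a b ha hb => by
    simpa only [hsymm.apply i j, two_mul] using hA.quadratic_nonneg i j ha hb

end Copositive

lemma trace_transpose_mul_mul_mul {m n R : Type*} [Fintype m] [Fintype n] [CommSemiring R]
    (U : Matrix m n R) (X : Matrix m m R) (Y : Matrix n n R) :
    (Uᵀ * X * U * Y).trace = (X * (U * Y * Uᵀ)).trace := by
  rw [Matrix.mul_assoc, Matrix.mul_assoc, trace_mul_comm]
  simp only [Matrix.mul_assoc]

open ComplexOrder in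
lemma trace_mul_nonneg_of_posSemidef {ι 𝕜 : Type*} [Fintype ι] [RCLike 𝕜]
    {A B : Matrix ι ι 𝕜} (hA : A.PosSemidef) (hB : B.PosSemidef) : 0 ≤ (A * B).trace := by
  classical
  have h := (hA.hadamard hB.transpose).dotProduct_mulVec_nonneg 1
  rw [dotProduct_mulVec, star_one, dotProduct_vecMul_hadamard] at h
  simpa using h

lemma posSemidef_fin_two_of_sq_le {A : Matrix (Fin 2) (Fin 2) ℝ} (hA : A.IsSymm)
    (h₀ : 0 ≤ A 0 0) (h₁ : 0 ≤ A 1 1) (hsq : A 0 1 ^ 2 ≤ A 0 0 * A 1 1) : A.PosSemidef := by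
  refine .of_dotProduct_mulVec_nonneg hA fun x => ?_
  have hcross : (2 * A 0 1 * (x 0 * x 1)) ^ 2 ≤ (A 0 0 * x 0 ^ 2 + A 1 1 * x 1 ^ 2) ^ 2 :=
    calc (2 * A 0 1 * (x 0 * x 1)) ^ 2 = 4 * (x 0 * x 1) ^ 2 * A 0 1 ^ 2 := by ring
      _ ≤ 4 * (x 0 * x 1) ^ 2 * (A 0 0 * A 1 1) := by gcongr
      _ ≤ (A 0 0 * x 0 ^ 2 + A 1 1 * x 1 ^ 2) ^ 2 := by
        linarith [sq_nonneg (A 0 0 * x 0 ^ 2 - A 1 1 * x 1 ^ 2)]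
  have hlower := (abs_le.1 (abs_le_of_sq_le_sq hcross (by positivity))).1
  simp only [star_trivial, dotProduct, mulVec, Fin.sum_univ_two, hA.apply 0 1]
  linarith

section GeomMeanCap

variable {ι : Type*}

/-- The matrix `A` with each entry capped at the geometric mean of the diagonal entries of its row
and column, used to split a copositive `2 × 2` matrix into a positive semidefinite and an entrywise
nonnegative one. The diagonal needs no special case: there the cap is `√(A i i * A i i) = |A i i|`,
which leaves the entry unchanged whatever its sign. -/
def geomMeanCap (A : Matrix ι ι ℝ) : Matrix ι ι ℝ :=
  of fun i j => min (A i j) √(A i i * A j j)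

lemma geomMeanCap_le (A : Matrix ι ι ℝ) (i j : ι) : geomMeanCap A i j ≤ A i j :=
  min_le_left _ _

lemma geomMeanCap_le_sqrt (A : Matrix ι ι ℝ) (i j : ι) : geomMeanCap A i j ≤ √(A i i * A j j) :=
  min_le_right _ _

lemma geomMeanCap_apply_self (A : Matrix ι ι ℝ) (i : ι) : geomMeanCap A i i = A i i :=
  min_eq_left <| (le_abs_self _).trans_eq (Real.sqrt_mul_self_eq_abs _).symm

lemma isSymm_geomMeanCap {A : Matrix ι ι ℝ} (hA : A.IsSymm) : (geomMeanCap A).IsSymm :=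
  .ext fun i j => by simp only [geomMeanCap, of_apply, hA.apply, mul_comm]

lemma IsCopositive.posSemidef_geomMeanCap {A : Matrix (Fin 2) (Fin 2) ℝ} (hA : IsCopositive A)
    (hsymm : A.IsSymm) : (geomMeanCap A).PosSemidef := by
  have hprod : 0 ≤ A 0 0 * A 1 1 := mul_nonneg (hA.diag_nonneg 0) (hA.diag_nonneg 1)
  refine posSemidef_fin_two_of_sq_le (isSymm_geomMeanCap hsymm) ?_ ?_ ?_ <;>
    simp only [geomMeanCap_apply_self]
  · exact hA.diag_nonneg 0
  · exact hA.diag_nonneg 1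
  · have hlower : -√(A 0 0 * A 1 1) ≤ geomMeanCap A 0 1 :=
      le_min (hA.neg_sqrt_mul_le hsymm 0 1) (neg_le_self (Real.sqrt_nonneg _))
    exact (sq_le_sq' hlower (geomMeanCap_le_sqrt A 0 1)).trans_eq (Real.sq_sqrt hprod)

end GeomMeanCap

section Iota

variable {n : ℕ}

lemma iota_eq_sum_single (i j : Fin n) (S : Matrix (Fin 2) (Fin 2) ℝ) :
    iota i j S = ∑ a, ∑ b, single (![i, j] a) (![i, j] b) (S a b) := by
  ext r s
  simp [iota, single_apply, eq_comm, Fin.sum_univ_two, add_assoc]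

lemma trace_iota_mul (i j : Fin n) (S : Matrix (Fin 2) (Fin 2) ℝ) (Y : Matrix (Fin n) (Fin n) ℝ) :
    (iota i j S * Y).trace = (S * Y.submatrix ![i, j] ![i, j]).trace := by
  simp only [iota_eq_sum_single, Finset.sum_mul, trace_sum, trace_single_mul]
  rfl

lemma iota_zero (i j : Fin n) : iota i j 0 = 0 := by
  simp [iota_eq_sum_single]

lemma iota_mem_SDD {i j : Fin n} (hij : i < j) {S : Matrix (Fin 2) (Fin 2) ℝ}
    (hS : S.PosSemidef) : iota i j S ∈ SDD n := by
  refine ⟨fun k l => if k = i ∧ l = j then S else 0, fun k l => ?_, ?_⟩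
  · dsimp only
    split_ifs
    exacts [hS, .zero]
  · rw [Finset.sum_eq_single_of_mem i (Finset.mem_univ i) fun k _ hk => by simp [hk, iota_zero],
      Finset.sum_eq_single_of_mem j (Finset.mem_univ j) fun l _ hl => by simp [hl, iota_zero]]
    simp [hij]

lemma iota_mem_NonnegMat (i j : Fin n) {S : Matrix (Fin 2) (Fin 2) ℝ} (hS : S ∈ NonnegMat 2) :
    iota i j S ∈ NonnegMat n := by
  refine ⟨.ext fun r s => ?_, fun r s => ?_⟩
  · simp only [iota, of_apply, hS.1.apply 0 1, and_comm]
    ring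
  · simp only [iota_eq_sum_single, Matrix.sum_apply, single_apply]
    exact Finset.sum_nonneg fun a _ => Finset.sum_nonneg fun b _ =>
      ite_nonneg (hS.2 a b) le_rfl

lemma iota_vecMulVec_self_mem_SDDplus {i j : Fin n} (hij : i < j) {x : Fin 2 → ℝ} (hx : 0 ≤ x) :
    iota i j (vecMulVec x x) ∈ SDDplus n := by
  refine ⟨iota_mem_SDD hij (posSemidef_vecMulVec_self_star x), iota_mem_NonnegMat i j ⟨?_, ?_⟩⟩
  · exact transpose_vecMulVec x x
  · exact fun a b => mul_nonneg (hx a) (hx b)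

end Iota

section DualCone

variable {n t : ℕ}

lemma dualCone_add_subset_dualCone_inter (C D : Set (Matrix (Fin n) (Fin n) ℝ)) :
    dualCone C + dualCone D ⊆ dualCone (C ∩ D) := by
  rintro _ ⟨V, ⟨hV, hVC⟩, W, ⟨hW, hWD⟩, rfl⟩
  refine ⟨hV.add hW, fun X hX => ?_⟩
  rw [Matrix.mul_add, trace_add]
  exact add_nonneg (hVC X hX.1) (hWD X hX.2)

lemma NonnegMat_subset_dualCone_NonnegMat (n : ℕ) : NonnegMat n ⊆ dualCone (NonnegMat n) :=
  fun _ hY => ⟨hY.1, fun _ hX => Finset.sum_nonneg fun i _ => dotProduct_nonneg_of_nonneg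
    (hX.2 i) fun j => hY.2 j i⟩

lemma dualCone_image_transpose_mul_mul (U : Matrix (Fin t) (Fin n) ℝ)
    (C : Set (Matrix (Fin t) (Fin t) ℝ)) :
    dualCone ((fun X => Uᵀ * X * U) '' C) = {Y | Y.IsSymm ∧ U * Y * Uᵀ ∈ dualCone C} := by
  ext Y
  simp only [dualCone, forall_mem_image, trace_transpose_mul_mul_mul, mem_ofPred_eq]
  refine and_congr_right fun hY => (and_iff_right ?_).symm
  simp [IsSymm, hY.eq, Matrix.mul_assoc]

lemma SDDplusU_eq_image (U : Matrix (Fin t) (Fin n) ℝ) :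
    SDDplusU U = (fun X => Uᵀ * X * U) '' SDDplus t := by
  simp only [SDDplusU, image, eq_comm]

lemma mem_dualCone_SDD_of_posSemidef_submatrix {Y : Matrix (Fin n) (Fin n) ℝ} (hY : Y.IsSymm)
    (h : ∀ i j, i < j → (Y.submatrix ![i, j] ![i, j]).PosSemidef) : Y ∈ dualCone (SDD n) := by
  refine ⟨hY, ?_⟩
  rintro _ ⟨S, hS, rfl⟩
  simp only [Finset.sum_mul, trace_sum]
  refine Finset.sum_nonneg fun i _ => Finset.sum_nonneg fun j _ => ?_
  split_ifs with hij
  · rw [trace_iota_mul]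
    exact trace_mul_nonneg_of_posSemidef (hS i j) (h i j hij)
  · simp

lemma isCopositive_submatrix_of_mem_dualCone_SDDplus {Y : Matrix (Fin n) (Fin n) ℝ}
    (hY : Y ∈ dualCone (SDDplus n)) {i j : Fin n} (hij : i < j) :
    IsCopositive (Y.submatrix ![i, j] ![i, j]) := by
  intro x hx
  have h := hY.2 _ (iota_vecMulVec_self_mem_SDDplus hij hx)
  rwa [trace_iota_mul, vecMulVec_mul, trace_vecMulVec, dotProduct_comm, ← dotProduct_mulVec] at h

theorem dualCone_SDDplus (n : ℕ) :
    dualCone (SDDplus n) = dualCone (SDD n) + NonnegMat n := by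
  refine Subset.antisymm (fun Y hY => ?_) ?_
  · have hcap : geomMeanCap Y ∈ dualCone (SDD n) :=
      mem_dualCone_SDD_of_posSemidef_submatrix (isSymm_geomMeanCap hY.1) fun i j hij =>
        (isCopositive_submatrix_of_mem_dualCone_SDDplus hY hij).posSemidef_geomMeanCap
          (hY.1.submatrix _)
    have hrest : Y - geomMeanCap Y ∈ NonnegMat n :=
      ⟨hY.1.sub (isSymm_geomMeanCap hY.1), fun i j => sub_nonneg.2 (geomMeanCap_le Y i j)⟩
    exact ⟨_, hcap, _, hrest, add_sub_cancel _ _⟩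
  · exact (add_subset_add_left (NonnegMat_subset_dualCone_NonnegMat n)).trans
      (dualCone_add_subset_dualCone_inter _ _)

end DualCone

theorem dual_SDDplusU_general {t n : ℕ} (U : Matrix (Fin t) (Fin n) ℝ) :
    dualCone (SDDplusU U) =
      {Y | Y.IsSymm ∧ U * Y * Uᵀ ∈ dualCone (SDDplus t)} ∧
    dualCone (SDDplusU U) =
      {Y | Y.IsSymm ∧ U * Y * Uᵀ ∈ dualCone (SDD t) + NonnegMat t} := by
  rw [← dualCone_SDDplus, and_self, SDDplusU_eq_image]
  exact dualCone_image_transpose_mul_mul U (SDDplus t)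

/-- `(SDDⁿ₊(U))* = {Y ∈ Sⁿ : U Y Uᵀ ∈ (SDDᵗ₊)*} = {Y ∈ Sⁿ : U Y Uᵀ ∈ (SDDᵗ)* + Nᵗ}`. -/
theorem dual_SDDplusU {t n : ℕ} (U : Matrix (Fin t) (Fin n) ℝ)
    (hU : ∀ i j, 0 ≤ U i j) (hrow : ∀ i, ∑ j, U i j = 1) :
    dualCone (SDDplusU U) =
      {Y | Y.IsSymm ∧ U * Y * Uᵀ ∈ dualCone (SDDplus t)} ∧
    dualCone (SDDplusU U) =
      {Y | Y.IsSymm ∧ U * Y * Uᵀ ∈ dualCone (SDD t) + NonnegMat t} := by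
  exact dual_SDDplusU_general U

end
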